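/- arXiv:1901.07736 — 2 statements merged into one kernel-verified Lean document; each statement's English description precedes it below -/
import Mathlib

section
/- Let φ(z) = az with 0 < a < 1 (a real). Then the numerical range of the composition operator C_φ on F² is the half-open interval (0, 1]; in particular 0 ∉ W(C_φ). -/
open MeasureTheory Complex

/-- The Gaussian measure `π⁻¹ e^{-|z|²} dA(z)` on `ℂ`. -/
noncomputable def gaussMeasure : Measure ℂ :=
  (volume : Measure ℂ).withDensity fun z => ENNReal.ofReal (Real.exp (-(‖z‖ ^ 2)) / Real.pi)

/-- A function is entire if it is differentiable on all of `ℂ`. -/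
def Entire (f : ℂ → ℂ) : Prop := Differentiable ℂ f

/-- The squared Fock-space norm `∫ |f|² dμ`. -/
noncomputable def fockNormSq (f : ℂ → ℂ) : ℝ := ∫ z, ‖f z‖ ^ 2 ∂gaussMeasure

/-- Membership in the Fock space `F²`: entire and square integrable w.r.t. the Gaussian. -/
def MemFock (f : ℂ → ℂ) : Prop :=
  Entire f ∧ Integrable (fun z => ‖f z‖ ^ 2) gaussMeasure

/-- The Fock-space inner product `⟨f, g⟩ = ∫ f ḡ dμ`. -/
noncomputable def fockInner (f g : ℂ → ℂ) : ℂ :=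
  ∫ z, f z * (starRingEnd ℂ) (g z) ∂gaussMeasure

/-- The weighted composition operator `C_{ψ,φ} f = ψ · (f ∘ φ)`. -/
def wcomp (ψ φ f : ℂ → ℂ) : ℂ → ℂ := fun z => ψ z * f (φ z)

/-- Boundedness of `C_{ψ,φ}` on `F²`. -/
def BoundedWCO (ψ φ : ℂ → ℂ) : Prop :=
  ∃ C : ℝ, ∀ f, MemFock f →
    MemFock (wcomp ψ φ f) ∧ fockNormSq (wcomp ψ φ f) ≤ C * fockNormSq f

/-- The numerical range `W(C_{ψ,φ}) = {⟨C_{ψ,φ} f, f⟩ : ‖f‖ = 1}` on `F²`. -/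
noncomputable def numRange (ψ φ : ℂ → ℂ) : Set ℂ :=
  {w | ∃ f, MemFock f ∧ fockNormSq f = 1 ∧ w = fockInner (wcomp ψ φ f) f}

/-- The point spectrum of `C_{ψ,φ}` on `F²`. -/
def pointSpectrum (ψ φ : ℂ → ℂ) : Set ℂ :=
  {lam | ∃ f, MemFock f ∧ f ≠ 0 ∧ wcomp ψ φ f = fun z => lam * f z}

/-- Compactness of `C_{ψ,φ}` on `F²`: it is bounded and the image of every sequence in the
unit ball of `F²` has a subsequence which is Cauchy in the `F²` norm. -/
def CompactWCO (ψ φ : ℂ → ℂ) : Prop :=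
  BoundedWCO ψ φ ∧ ∀ f : ℕ → ℂ → ℂ, (∀ k, MemFock (f k) ∧ fockNormSq (f k) ≤ 1) →
    ∃ g : ℕ → ℕ, StrictMono g ∧ ∀ ε : ℝ, 0 < ε → ∃ N : ℕ, ∀ i, N ≤ i → ∀ j, N ≤ j →
      fockNormSq (fun z => wcomp ψ φ (f (g i)) z - wcomp ψ φ (f (g j)) z) < ε

open scoped Interval

section Gaussian

lemma measurable_gaussDensity :
    Measurable fun z : ℂ => ENNReal.ofReal (Real.exp (-(‖z‖ ^ 2)) / Real.pi) := by
  fun_prop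

lemma integrable_gaussMeasure_iff {g : ℂ → ℝ} :
    Integrable g gaussMeasure ↔ Integrable fun z => g z * Real.exp (-(‖z‖ ^ 2)) := by
  rw [gaussMeasure, integrable_withDensity_iff measurable_gaussDensity (by simp)]
  have h : (fun z : ℂ => g z * (ENNReal.ofReal (Real.exp (-(‖z‖ ^ 2)) / Real.pi)).toReal) =
      fun z => g z * Real.exp (-(‖z‖ ^ 2)) * Real.pi⁻¹ := by
    funext z
    rw [ENNReal.toReal_ofReal (by positivity)]
    ring
  rw [h, integrable_mul_const_iff (by simp [Real.pi_ne_zero])]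

lemma integral_gaussMeasure (g : ℂ → ℝ) :
    ∫ z, g z ∂gaussMeasure = Real.pi⁻¹ * ∫ z, g z * Real.exp (-(‖z‖ ^ 2)) := by
  rw [gaussMeasure, integral_withDensity_eq_integral_toReal_smul measurable_gaussDensity (by simp),
    ← integral_const_mul]
  refine integral_congr_ae (.of_forall fun z => ?_)
  simp only [smul_eq_mul]
  rw [ENNReal.toReal_ofReal (by positivity)]
  ring

lemma integral_norm_pow_mul_exp_neg (n : ℕ) :
    ∫ z : ℂ, ‖z‖ ^ (2 * n) * Real.exp (-(‖z‖ ^ 2)) = Real.pi * n.factorial := by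
  have h := Complex.integral_rpow_mul_exp_neg_rpow (p := 2) (q := (2 * n : ℕ)) (by norm_num)
    (by have : (0 : ℝ) ≤ (2 * n : ℕ) := Nat.cast_nonneg _
        linarith)
  have hg : (((2 * n : ℕ) : ℝ) + 2) / 2 = n + 1 := by push_cast; ring
  rw [hg, Real.Gamma_nat_eq_factorial] at h
  simp only [Real.rpow_natCast, Real.rpow_two] at h
  rw [h]
  ring

lemma integrable_norm_pow_gaussMeasure (n : ℕ) :
    Integrable (fun z : ℂ => ‖z‖ ^ (2 * n)) gaussMeasure := by
  rw [integrable_gaussMeasure_iff]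
  refine Integrable.of_integral_ne_zero ?_
  rw [integral_norm_pow_mul_exp_neg]
  positivity

lemma integral_norm_pow_gaussMeasure (n : ℕ) :
    ∫ z : ℂ, ‖z‖ ^ (2 * n) ∂gaussMeasure = n.factorial := by
  rw [integral_gaussMeasure, integral_norm_pow_mul_exp_neg, inv_mul_cancel_left₀ Real.pi_ne_zero]

lemma measurePreserving_mul_exp_gaussMeasure (θ : ℝ) :
    MeasurePreserving (fun z : ℂ => exp (θ * I) * z) gaussMeasure gaussMeasure := by
  have hv : MeasurePreserving (fun z : ℂ => exp (θ * I) * z) volume volume :=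
    (rotation (Circle.exp θ)).measurePreserving
  have hn : ∀ z : ℂ, ‖exp (θ * I) * z‖ = ‖z‖ := fun z => by simp [norm_exp_ofReal_mul_I]
  refine ⟨hv.measurable, Measure.ext fun s hs => ?_⟩
  rw [Measure.map_apply hv.measurable hs, gaussMeasure, withDensity_apply _ hs,
    withDensity_apply _ (hv.measurable hs),
    ← hv.setLIntegral_comp_preimage hs measurable_gaussDensity]
  simp only [hn]

instance : SFinite gaussMeasure := by
  unfold gaussMeasure
  infer_instance

/-- Integration against the Gaussian measure factors through averaging over rotations. -/
lemma integrable_and_integral_rotation_average {F : ℂ → ℂ} (hF : Continuous F)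
    (hi : Integrable F gaussMeasure) :
    Integrable (fun z => ∫ θ in (0 : ℝ)..2 * Real.pi, F (exp (θ * I) * z)) gaussMeasure ∧
    ∫ z, (∫ θ in (0 : ℝ)..2 * Real.pi, F (exp (θ * I) * z)) ∂gaussMeasure =
      2 * Real.pi * ∫ z, F z ∂gaussMeasure := by
  have hnorm (θ : ℝ) : ∫ z, ‖F (exp (θ * I) * z)‖ ∂gaussMeasure = ∫ z, ‖F z‖ ∂gaussMeasure := by
    have hp := measurePreserving_mul_exp_gaussMeasure θ
    conv_rhs => rw [← hp.map_eq]
    rw [integral_map hp.aemeasurable hF.norm.aestronglyMeasurable]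
  have hval (θ : ℝ) : ∫ z, F (exp (θ * I) * z) ∂gaussMeasure = ∫ z, F z ∂gaussMeasure := by
    have hp := measurePreserving_mul_exp_gaussMeasure θ
    conv_rhs => rw [← hp.map_eq]
    rw [integral_map hp.aemeasurable hF.aestronglyMeasurable]
  have hint : Integrable (Function.uncurry fun (θ : ℝ) z => F (exp (θ * I) * z))
      ((volume.restrict (Ι 0 (2 * Real.pi))).prod gaussMeasure) := by
    rw [integrable_prod_iff]
    · refine ⟨.of_forall fun θ => ?_, ?_⟩
      · exact (measurePreserving_mul_exp_gaussMeasure θ).integrable_comp_of_integrable hi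
      · simp only [Function.uncurry_apply_pair, hnorm]
        rw [Set.uIoc_of_le Real.two_pi_pos.le]
        exact integrable_const _
    · refine Continuous.aestronglyMeasurable ?_
      unfold Function.uncurry
      fun_prop
  constructor
  · simp only [intervalIntegral.integral_of_le Real.two_pi_pos.le]
    rw [Set.uIoc_of_le Real.two_pi_pos.le] at hint
    exact hint.integral_prod_right
  · rw [← intervalIntegral_integral_swap hint]
    simp [hval]

end Gaussian

section CircleParseval

lemma integral_exp_pow_mul_conj_exp_pow (n m : ℕ) :
    ∫ θ in (0 : ℝ)..2 * Real.pi, exp (θ * I) ^ n * (starRingEnd ℂ) (exp (θ * I) ^ m) =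
      if n = m then 2 * (Real.pi : ℂ) else 0 := by
  have h (θ : ℝ) : exp (θ * I) ^ n * (starRingEnd ℂ) (exp (θ * I) ^ m) =
      exp ((((n : ℤ) - m : ℤ) * I) * θ) := by
    rw [map_pow, ← exp_conj, ← exp_nat_mul, ← exp_nat_mul, ← exp_add]
    congr 1
    simp
    ring
  simp only [h]
  split_ifs with hnm
  · simp [hnm]
  · have hk : ((n : ℤ) - m : ℤ) ≠ 0 := by omega
    rw [integral_exp_mul_complex (mul_ne_zero (by exact_mod_cast hk) I_ne_zero)]
    have h2 : exp ((((n : ℤ) - m : ℤ) * I) * ((2 * Real.pi : ℝ) : ℂ)) = 1 := by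
      rw [← exp_int_mul_two_pi_mul_I ((n : ℤ) - m)]
      congr 1
      push_cast
      ring
    rw [h2]
    simp

variable {f : ℂ → ℂ} {c : ℕ → ℂ}

lemma integral_exp_pow_mul_conj (hf : ∀ z, HasSum (fun n => c n * z ^ n) (f z)) (n : ℕ) (z : ℂ) :
    ∫ θ in (0 : ℝ)..2 * Real.pi, exp (θ * I) ^ n * (starRingEnd ℂ) (f (exp (θ * I) * z)) =
      2 * Real.pi * (starRingEnd ℂ) (c n * z ^ n) := by
  have hs := intervalIntegral.hasSum_integral_of_dominated_convergence (μ := volume)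
    (a := 0) (b := 2 * Real.pi)
    (F := fun m (θ : ℝ) =>
      exp (θ * I) ^ n * (starRingEnd ℂ) (c m * (exp (θ * I) * z) ^ m))
    (f := fun θ : ℝ => exp (θ * I) ^ n * (starRingEnd ℂ) (f (exp (θ * I) * z)))
    (fun m _ => ‖c m * z ^ m‖)
    (fun m => Continuous.aestronglyMeasurable (by fun_prop))
    (fun m => .of_forall fun θ _ => by simp [norm_exp_ofReal_mul_I])
    (.of_forall fun θ _ => (hf z).summable.norm)
    intervalIntegrable_const
    (.of_forall fun θ _ => (((hf _).map (starRingEnd ℂ) continuous_conj).mul_left _))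
  refine hs.unique ?_
  have hterm (m : ℕ) : ∫ θ in (0 : ℝ)..2 * Real.pi,
      exp (θ * I) ^ n * (starRingEnd ℂ) (c m * (exp (θ * I) * z) ^ m) =
      (starRingEnd ℂ) (c m * z ^ m) * if n = m then 2 * (Real.pi : ℂ) else 0 := by
    rw [← integral_exp_pow_mul_conj_exp_pow, ← intervalIntegral.integral_const_mul]
    congr 1
    funext θ
    simp only [map_mul, map_pow, mul_pow]
    ring
  simp only [hterm]
  have hval : 2 * Real.pi * (starRingEnd ℂ) (c n * z ^ n) =
      (starRingEnd ℂ) (c n * z ^ n) * if n = n then 2 * (Real.pi : ℂ) else 0 := by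
    rw [if_pos rfl, mul_comm]
  rw [hval]
  refine hasSum_single n fun m hm => ?_
  rw [if_neg hm.symm, mul_zero]

lemma hasSum_circle_integral_dilation (hc : Continuous f)
    (hf : ∀ z, HasSum (fun n => c n * z ^ n) (f z)) (a : ℝ) (z : ℂ) :
    HasSum (fun n => 2 * Real.pi * ((‖c n‖ ^ 2 * a ^ n * ‖z‖ ^ (2 * n) : ℝ) : ℂ))
      (∫ θ in (0 : ℝ)..2 * Real.pi,
        f (a * (exp (θ * I) * z)) * (starRingEnd ℂ) (f (exp (θ * I) * z))) := by
  have hs := intervalIntegral.hasSum_integral_of_dominated_convergence (μ := volume)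
    (a := 0) (b := 2 * Real.pi)
    (F := fun n (θ : ℝ) => c n * (a * (exp (θ * I) * z)) ^ n *
      (starRingEnd ℂ) (f (exp (θ * I) * z)))
    (f := fun θ : ℝ => f (a * (exp (θ * I) * z)) * (starRingEnd ℂ) (f (exp (θ * I) * z)))
    (fun n θ => ‖c n * (a * z) ^ n‖ * ‖f (exp (θ * I) * z)‖)
    (fun n => Continuous.aestronglyMeasurable (by fun_prop))
    (fun n => .of_forall fun θ _ => by simp [norm_exp_ofReal_mul_I])
    (.of_forall fun θ _ => (hf (a * z)).summable.norm.mul_right _)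
    (by
      simp only [tsum_mul_right]
      exact Continuous.intervalIntegrable (by fun_prop) _ _)
    (.of_forall fun θ _ => (hf _).mul_right _)
  convert! hs using 2 with n
  have h (θ : ℝ) : c n * (a * (exp (θ * I) * z)) ^ n * (starRingEnd ℂ) (f (exp (θ * I) * z)) =
      c n * a ^ n * z ^ n * (exp (θ * I) ^ n * (starRingEnd ℂ) (f (exp (θ * I) * z))) := by
    ring
  simp only [h]
  rw [intervalIntegral.integral_const_mul, integral_exp_pow_mul_conj hf]
  have h1 := mul_conj' (c n)
  have h2 := mul_conj' (z ^ n)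
  rw [norm_pow] at h2
  rw [map_mul]
  push_cast
  rw [pow_mul', ← h1]
  push_cast at h2
  rw [← h2]
  ring

end CircleParseval

section Dilation

variable {f : ℂ → ℂ} {c : ℕ → ℂ} {a : ℝ}

lemma MemFock.comp_dilation (hf : MemFock f) (ha0 : 0 < a) (ha1 : a ≤ 1) :
    MemFock fun z => f (a * z) := by
  refine ⟨hf.1.comp (differentiable_id.const_mul _), ?_⟩
  have hi := hf.2
  have hcont : Continuous f := hf.1.continuous
  rw [integrable_gaussMeasure_iff] at hi ⊢
  have hd : Integrable fun z => ‖f z‖ ^ 2 * Real.exp (-((‖z‖ / a) ^ 2)) := by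
    refine hi.mono' (Continuous.aestronglyMeasurable (by fun_prop)) (.of_forall fun z => ?_)
    rw [Real.norm_of_nonneg (by positivity)]
    gcongr
    exact le_div_self (norm_nonneg z) ha0 ha1
  convert! hd.comp_smul ha0.ne' using 2 with z
  rw [norm_smul, Real.norm_of_nonneg ha0.le, mul_div_cancel_left₀ _ ha0.ne', real_smul]

lemma MemFock.memLp (hf : MemFock f) : MemLp f 2 gaussMeasure :=
  (memLp_two_iff_integrable_sq_norm hf.1.continuous.aestronglyMeasurable).2 hf.2

lemma summable_dilation_series (hf : ∀ z, HasSum (fun n => c n * z ^ n) (f z))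
    (hc : Continuous f) (a : ℝ) (z : ℂ) :
    Summable fun n => ‖c n‖ ^ 2 * a ^ n * ‖z‖ ^ (2 * n) := by
  have h := (hasSum_circle_integral_dilation hc hf a z).summable
  rw [summable_mul_left_iff (by simp [Real.pi_ne_zero])] at h
  exact_mod_cast h

/-- The quadratic form of the dilation operator in terms of Taylor coefficients. -/
lemma integrable_and_fockInner_dilation (hf : MemFock f)
    (hs : ∀ z, HasSum (fun n => c n * z ^ n) (f z)) (ha0 : 0 < a) (ha1 : a ≤ 1) :
    Integrable (fun z : ℂ => ∑' n, ‖c n‖ ^ 2 * a ^ n * ‖z‖ ^ (2 * n)) gaussMeasure ∧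
    fockInner (wcomp (fun _ => 1) (fun z => (a : ℂ) * z) f) f =
      ((∫ z : ℂ, ∑' n, ‖c n‖ ^ 2 * a ^ n * ‖z‖ ^ (2 * n) ∂gaussMeasure : ℝ) : ℂ) := by
  have hcont : Continuous f := hf.1.continuous
  have hF : Integrable (fun z => f (a * z) * (starRingEnd ℂ) (f z)) gaussMeasure :=
    (hf.comp_dilation ha0 ha1).memLp.integrable_mul hf.memLp.star
  obtain ⟨hint, hval⟩ := integrable_and_integral_rotation_average (by fun_prop) hF
  have hsum (z : ℂ) : ∫ θ in (0 : ℝ)..2 * Real.pi,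
      f (a * (exp (θ * I) * z)) * (starRingEnd ℂ) (f (exp (θ * I) * z)) =
      2 * Real.pi * ((∑' n, ‖c n‖ ^ 2 * a ^ n * ‖z‖ ^ (2 * n) : ℝ) : ℂ) := by
    rw [← (hasSum_circle_integral_dilation hcont hs a z).tsum_eq, tsum_mul_left, ofReal_tsum]
  have hpi : (2 * Real.pi : ℂ) ≠ 0 := by simp [Real.pi_ne_zero]
  simp only [hsum] at hint hval
  constructor
  · rw [integrable_const_mul_iff (isUnit_iff_ne_zero.2 hpi)] at hint
    simpa using hint.re
  · rw [integral_const_mul, integral_complex_ofReal] at hval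
    rw [mul_left_cancel₀ hpi hval]
    simp [fockInner, wcomp]

lemma fockNormSq_eq_integral_tsum (hf : MemFock f)
    (hs : ∀ z, HasSum (fun n => c n * z ^ n) (f z)) :
    fockNormSq f = ∫ z : ℂ, ∑' n, ‖c n‖ ^ 2 * 1 ^ n * ‖z‖ ^ (2 * n) ∂gaussMeasure := by
  have h := (integrable_and_fockInner_dilation hf hs one_pos le_rfl).2
  have h' : fockInner (wcomp (fun _ => 1) (fun z => ((1 : ℝ) : ℂ) * z) f) f = fockNormSq f := by
    simp only [fockInner, wcomp, fockNormSq, ← integral_complex_ofReal, ofReal_one, one_mul,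
      mul_conj', ofReal_pow]
  rw [h'] at h
  exact_mod_cast h

lemma exists_hasSum_of_entire (hf : Entire f) :
    ∃ c : ℕ → ℂ, ∀ z, HasSum (fun n => c n * z ^ n) (f z) := by
  refine ⟨fun n => (n.factorial : ℂ)⁻¹ * iteratedDeriv n f 0, fun z => ?_⟩
  convert! Complex.hasSum_taylorSeries_of_entire hf 0 z using 2 with n
  simp only [sub_zero, smul_eq_mul]
  ring

lemma fockInner_dilation_mem_Ioc (hf : MemFock f) (hf1 : fockNormSq f = 1)
    (ha0 : 0 < a) (ha1 : a ≤ 1) :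
    fockInner (wcomp (fun _ => 1) (fun z => (a : ℂ) * z) f) f ∈
      (fun t : ℝ => (t : ℂ)) '' Set.Ioc 0 1 := by
  obtain ⟨c, hs⟩ := exists_hasSum_of_entire hf.1
  have hcont : Continuous f := hf.1.continuous
  obtain ⟨hi, hv⟩ := integrable_and_fockInner_dilation hf hs ha0 ha1
  have hi1 := (integrable_and_fockInner_dilation hf hs one_pos le_rfl).1
  rw [fockNormSq_eq_integral_tsum hf hs] at hf1
  have hnn (z : ℂ) (n : ℕ) : 0 ≤ ‖c n‖ ^ 2 * a ^ n * ‖z‖ ^ (2 * n) := by positivity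
  refine ⟨_, ⟨?_, ?_⟩, hv.symm⟩
  · have h0 := integral_nonneg (μ := gaussMeasure)
      (f := fun z : ℂ => ∑' n, ‖c n‖ ^ 2 * a ^ n * ‖z‖ ^ (2 * n)) fun z => tsum_nonneg (hnn z)
    refine h0.lt_of_ne fun h => ?_
    have hae := (integral_eq_zero_iff_of_nonneg (fun z => tsum_nonneg (hnn z)) hi).1 h.symm
    have hzero : ∫ z : ℂ, ∑' n, ‖c n‖ ^ 2 * 1 ^ n * ‖z‖ ^ (2 * n) ∂gaussMeasure = 0 := by
      refine integral_eq_zero_of_ae (hae.mono fun z hz => ?_)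
      have hz' := (summable_dilation_series hs hcont a z).hasSum
      rw [show ∑' n, ‖c n‖ ^ 2 * a ^ n * ‖z‖ ^ (2 * n) = 0 from hz,
        hasSum_zero_iff_of_nonneg (hnn z)] at hz'
      refine (tsum_congr fun n => ?_).trans tsum_zero
      have hn : ‖c n‖ ^ 2 * a ^ n * ‖z‖ ^ (2 * n) = 0 := congrFun hz' n
      have han : a ^ n ≠ 0 := (pow_pos ha0 n).ne'
      rw [one_pow, mul_one]
      rwa [mul_right_comm, mul_eq_zero, or_iff_left han] at hn
    exact one_ne_zero (hf1.symm.trans hzero)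
  · rw [← hf1]
    refine integral_mono hi hi1 fun z => ?_
    refine (summable_dilation_series hs hcont a z).tsum_le_tsum (fun n => ?_)
      (summable_dilation_series hs hcont 1 z)
    gcongr

end Dilation

section Binomial

/-- The function `α + β zⁿ` lies in the Fock space. -/
lemma memFock_const_add_mul_pow (α β : ℂ) (n : ℕ) : MemFock fun z => α + β * z ^ n := by
  refine ⟨by unfold Entire; fun_prop, ?_⟩
  have hpow : MemLp (fun z : ℂ => β * z ^ n) 2 gaussMeasure := by
    rw [memLp_two_iff_integrable_sq_norm (Continuous.aestronglyMeasurable (by fun_prop))]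
    convert! (integrable_norm_pow_gaussMeasure n).const_mul (‖β‖ ^ 2) using 2 with z
    rw [norm_mul, norm_pow, mul_pow, ← pow_mul']
  have hconst : MemLp (fun _ : ℂ => α) 2 gaussMeasure := by
    rw [memLp_two_iff_integrable_sq_norm aestronglyMeasurable_const]
    simpa using (integrable_norm_pow_gaussMeasure 0).const_mul (‖α‖ ^ 2)
  exact (memLp_two_iff_integrable_sq_norm (Continuous.aestronglyMeasurable (by fun_prop))).1
    (hconst.add hpow)

/-- The Taylor coefficients of `α + β zⁿ`. -/
def binomialCoeffs (α β : ℂ) (n : ℕ) : ℕ → ℂ := fun m => if m = 0 then α else if m = n then β else 0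

lemma hasSum_binomialCoeffs (α β : ℂ) {n : ℕ} (hn : n ≠ 0) (z : ℂ) :
    HasSum (fun m => binomialCoeffs α β n m * z ^ m) (α + β * z ^ n) := by
  have hval : α + β * z ^ n = ∑ m ∈ {0, n}, binomialCoeffs α β n m * z ^ m := by
    rw [Finset.sum_pair hn.symm]
    simp [binomialCoeffs, hn]
  rw [hval]
  refine hasSum_sum_of_ne_finset_zero fun m hm => ?_
  simp only [Finset.mem_insert, Finset.mem_singleton, not_or] at hm
  simp [binomialCoeffs, hm.1, hm.2]

lemma integral_tsum_binomialCoeffs (α β : ℂ) {n : ℕ} (hn : n ≠ 0) (a : ℝ) :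
    ∫ z : ℂ, ∑' m, ‖binomialCoeffs α β n m‖ ^ 2 * a ^ m * ‖z‖ ^ (2 * m) ∂gaussMeasure =
      ‖α‖ ^ 2 + ‖β‖ ^ 2 * a ^ n * n.factorial := by
  have h (z : ℂ) : ∑' m, ‖binomialCoeffs α β n m‖ ^ 2 * a ^ m * ‖z‖ ^ (2 * m) =
      ‖α‖ ^ 2 * ‖z‖ ^ (2 * 0) + ‖β‖ ^ 2 * a ^ n * ‖z‖ ^ (2 * n) := by
    rw [tsum_eq_sum (s := {0, n})]
    · rw [Finset.sum_pair hn.symm]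
      simp [binomialCoeffs, hn]
    · intro m hm
      simp only [Finset.mem_insert, Finset.mem_singleton, not_or] at hm
      simp [binomialCoeffs, hm.1, hm.2]
  simp only [h]
  rw [integral_add ((integrable_norm_pow_gaussMeasure 0).const_mul _)
    ((integrable_norm_pow_gaussMeasure n).const_mul _), integral_const_mul, integral_const_mul,
    integral_norm_pow_gaussMeasure, integral_norm_pow_gaussMeasure]
  simp

lemma ofReal_mem_numRange_dilation {a t : ℝ} (ha0 : 0 < a) (ha1 : a < 1) (ht : t ∈ Set.Ioc 0 1) :
    (t : ℂ) ∈ numRange (fun _ => 1) (fun z => (a : ℂ) * z) := by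
  obtain ⟨n, hnt⟩ := exists_pow_lt_of_lt_one ht.1 ha1
  have hn : n ≠ 0 := by
    rintro rfl
    exact (hnt.trans_le ht.2).ne (pow_zero a)
  have hlt : a ^ n < 1 := hnt.trans_le ht.2
  have hfac : (0 : ℝ) < n.factorial := by positivity
  set s : ℝ := (t - a ^ n) / (1 - a ^ n)
  have hs0 : 0 ≤ s := div_nonneg (by linarith) (by linarith)
  have hs1 : s ≤ 1 := (div_le_one (by linarith)).2 (by linarith [ht.2])
  have hst : s * (1 - a ^ n) = t - a ^ n := div_mul_cancel₀ _ (by linarith)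
  set α : ℂ := ((√s : ℝ) : ℂ)
  set β : ℂ := ((√((1 - s) / n.factorial) : ℝ) : ℂ)
  have hα : ‖α‖ ^ 2 = s := by
    rw [norm_real, Real.norm_eq_abs, sq_abs, Real.sq_sqrt hs0]
  have hβ : ‖β‖ ^ 2 * n.factorial = 1 - s := by
    rw [norm_real, Real.norm_eq_abs, sq_abs, Real.sq_sqrt (div_nonneg (by linarith) hfac.le),
      div_mul_cancel₀ _ hfac.ne']
  have hmem := memFock_const_add_mul_pow α β n
  have hsum := hasSum_binomialCoeffs α β hn
  refine ⟨_, hmem, ?_, ?_⟩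
  · rw [fockNormSq_eq_integral_tsum hmem hsum, integral_tsum_binomialCoeffs α β hn, one_pow,
      mul_one, hα, hβ]
    ring
  · rw [(integrable_and_fockInner_dilation hmem hsum ha0 ha1.le).2,
      integral_tsum_binomialCoeffs α β hn, mul_right_comm, hα, hβ]
    congr 1
    linarith

end Binomial

/-- For `φ(z) = az` with `0 < a < 1` real, the numerical range of `C_φ` on `F²` is the
half-open interval `(0, 1]`; in particular `0 ∉ W(C_φ)`. -/
theorem numRange_Caz_real
    (a : ℝ) (ha0 : 0 < a) (ha1 : a < 1) :
    numRange (fun _ => 1) (fun z => (a : ℂ) * z) = (fun t : ℝ => (t : ℂ)) '' Set.Ioc 0 1 ∧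
    (0 : ℂ) ∉ numRange (fun _ => 1) (fun z => (a : ℂ) * z) := by
  have heq : numRange (fun _ => 1) (fun z => (a : ℂ) * z) =
      (fun t : ℝ => (t : ℂ)) '' Set.Ioc 0 1 := by
    refine Set.Subset.antisymm ?_ ?_
    · rintro w ⟨f, hf, hf1, rfl⟩
      exact fockInner_dilation_mem_Ioc hf hf1 ha0 ha1.le
    · rintro _ ⟨t, ht, rfl⟩
      exact ofReal_mem_numRange_dilation ha0 ha1 ht
  refine ⟨heq, ?_⟩
  rw [heq]
  rintro ⟨t, ht, h0⟩
  exact ht.1.ne' (ofReal_eq_zero.1 h0)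
end

section
/- Let a ∈ ℂ with |a| = 1 and a not a root of unity. Then the numerical range of C_{az} on F² equals the open unit disk together with the points {a^m : m ≥ 0}: W(C_{az}) = 𝔻 ∪ {a^m : m ≥ 0}. -/
open MeasureTheory Complex

section Gauss

instance gaussMeasure.isOpenPosMeasure : gaussMeasure.IsOpenPosMeasure := by
  refine Measure.AbsolutelyContinuous.isOpenPosMeasure (μ := (volume : Measure ℂ)) ?_
  refine withDensity_absolutelyContinuous' (by fun_prop) (ae_of_all _ fun z => ?_)
  simp only [ne_eq, ENNReal.ofReal_eq_zero, not_le]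
  positivity

theorem measurePreserving_mul_gaussMeasure {a : ℂ} (ha : ‖a‖ = 1) :
    MeasurePreserving (fun z => a * z) gaussMeasure gaussMeasure := by
  have hvol : MeasurePreserving (fun z : ℂ => a * z) volume volume :=
    (rotation ⟨a, by simpa [Submonoid.unitSphere] using ha⟩).measurePreserving
  have hne : a ≠ 0 := norm_ne_zero_iff.1 (by simp [ha])
  refine ⟨by fun_prop, Measure.ext fun s hs => ?_⟩
  have hs' : MeasurableSet ((fun z => a * z) ⁻¹' s) := hs.preimage (by fun_prop)
  rw [Measure.map_apply (by fun_prop) hs, gaussMeasure, withDensity_apply _ hs,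
    withDensity_apply _ hs', ← hvol.setLIntegral_comp_preimage_emb
      (measurableEmbedding_mulLeft₀ hne) _ s]
  simp [ha]

theorem integrable_norm_pow_sq (m : ℕ) :
    Integrable (fun z : ℂ => ‖z ^ m‖ ^ 2) gaussMeasure := by
  rw [gaussMeasure, integrable_withDensity_iff_integrable_smul' (by fun_prop)
    (ae_of_all _ fun _ => ENNReal.ofReal_lt_top)]
  have key : Integrable fun z : ℂ => ‖z‖ ^ ((2 * m : ℕ) : ℝ) * Real.exp (-‖z‖ ^ (2 : ℝ)) := by
    refine Integrable.of_integral_ne_zero ?_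
    rw [Complex.integral_rpow_mul_exp_neg_rpow one_le_two
      (lt_of_lt_of_le (by norm_num) (Nat.cast_nonneg _))]
    have := Real.Gamma_pos_of_pos (s := (((2 * m : ℕ) : ℝ) + 2) / 2) (by positivity)
    positivity
  refine (key.div_const Real.pi).congr (ae_of_all _ fun z => ?_)
  dsimp only
  rw [ENNReal.toReal_ofReal (by positivity), Real.rpow_natCast, Real.rpow_two, norm_pow,
    smul_eq_mul]
  ring

end Gauss

section Fock

theorem MemFock.continuous {f : ℂ → ℂ} (hf : MemFock f) : Continuous f :=
  Differentiable.continuous hf.1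

theorem MemFock.integrable_mul_conj {f g : ℂ → ℂ} (hf : MemFock f) (hg : MemFock g) :
    Integrable (fun z => f z * (starRingEnd ℂ) (g z)) gaussMeasure := by
  have hcf := hf.continuous
  have hcg := hg.continuous
  refine (hf.2.add hg.2).mono' (Continuous.aestronglyMeasurable (by fun_prop))
    (ae_of_all _ fun z => ?_)
  simp only [norm_mul, RCLike.norm_conj, Pi.add_apply]
  nlinarith [sq_nonneg (‖f z‖ - ‖g z‖), sq_nonneg (‖f z‖ + ‖g z‖)]

theorem fockInner_self (f : ℂ → ℂ) : fockInner f f = fockNormSq f := by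
  rw [fockInner, fockNormSq, ← integral_complex_ofReal]
  simp [Complex.mul_conj']

theorem MemFock.eq_zero_of_fockNormSq {f : ℂ → ℂ} (hf : MemFock f) (h : fockNormSq f = 0) :
    f = 0 := by
  have hae := (integral_eq_zero_iff_of_nonneg (fun z => by positivity) hf.2).1 h
  refine Continuous.ae_eq_iff_eq gaussMeasure hf.continuous continuous_zero |>.1 ?_
  filter_upwards [hae] with z hz
  simpa using hz

theorem memFock_pow (m : ℕ) : MemFock fun z => z ^ m :=
  ⟨differentiable_pow m, integrable_norm_pow_sq m⟩

theorem MemFock.const_mul {f : ℂ → ℂ} (hf : MemFock f) (c : ℂ) : MemFock fun z => c * f z :=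
  ⟨Differentiable.const_mul hf.1 c, by simpa [mul_pow] using hf.2.const_mul (‖c‖ ^ 2)⟩

theorem MemFock.add {f g : ℂ → ℂ} (hf : MemFock f) (hg : MemFock g) :
    MemFock fun z => f z + g z := by
  have hcf := hf.continuous
  have hcg := hg.continuous
  refine ⟨Differentiable.add hf.1 hg.1, ((hf.2.const_mul 2).add (hg.2.const_mul 2)).mono'
    (Continuous.aestronglyMeasurable (by fun_prop)) (ae_of_all _ fun z => ?_)⟩
  simp only [norm_pow, norm_norm, Pi.add_apply]
  nlinarith [norm_add_le (f z) (g z), sq_nonneg (‖f z‖ - ‖g z‖), norm_nonneg (f z + g z)]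

theorem memFock_sum_pow (s : Finset ℕ) (c : ℕ → ℂ) :
    MemFock fun z => ∑ m ∈ s, c m * z ^ m := by
  induction s using Finset.induction_on with
  | empty => simpa using (memFock_pow 0).const_mul 0
  | insert m s hm ih =>
    simpa [Finset.sum_insert hm] using ((memFock_pow m).const_mul (c m)).add ih

theorem MemFock.comp_mul {f : ℂ → ℂ} (hf : MemFock f) {a : ℂ} (ha : ‖a‖ = 1) :
    MemFock fun z => f (a * z) := by
  have hdiff : Differentiable ℂ f := hf.1
  have hint := (measurePreserving_mul_gaussMeasure ha).integrable_comp_of_integrable hf.2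
  exact ⟨hdiff.comp (differentiable_id.const_mul a), hint⟩

theorem fockInner_comp_mul (f g : ℂ → ℂ) {a : ℂ} (ha : ‖a‖ = 1) :
    fockInner (fun z => f (a * z)) (fun z => g (a * z)) = fockInner f g :=
  (measurePreserving_mul_gaussMeasure ha).integral_comp
    (measurableEmbedding_mulLeft₀ (norm_ne_zero_iff.1 (by simp [ha])))
    (fun z => f z * (starRingEnd ℂ) (g z))

theorem fockInner_add_const_mul_self {f g : ℂ → ℂ} (hf : MemFock f) (hg : MemFock g) (w : ℂ) :
    fockInner (fun z => g z + w * f z) (fun z => g z + w * f z) =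
      fockInner g g + (starRingEnd ℂ) w * fockInner g f
        + w * (starRingEnd ℂ) (fockInner g f) + w * (starRingEnd ℂ) w * fockInner f f := by
  have hgg := hg.integrable_mul_conj hg
  have hgf := (hg.integrable_mul_conj hf).const_mul ((starRingEnd ℂ) w)
  have hfg := (hf.integrable_mul_conj hg).const_mul w
  have hff := (hf.integrable_mul_conj hf).const_mul (w * (starRingEnd ℂ) w)
  have hconj : (starRingEnd ℂ) (fockInner g f) = fockInner f g := by
    rw [fockInner, fockInner, ← integral_conj]
    simp [mul_comm]
  rw [hconj]
  simp only [fockInner]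
  rw [← integral_const_mul, ← integral_const_mul, ← integral_const_mul, ← integral_add hgg hgf,
    ← integral_add (by exact hgg.add hgf) hfg,
    ← integral_add (by exact (hgg.add hgf).add hfg) hff]
  congr 1 with z
  simp only [map_add, map_mul]
  ring

theorem fockInner_pow_of_ne {a : ℂ} (ha : ‖a‖ = 1) {m n : ℕ} (h : a ^ m ≠ a ^ n) :
    fockInner (fun z => z ^ m) (fun z => z ^ n) = 0 := by
  have hinv := fockInner_comp_mul (fun z => z ^ m) (fun z => z ^ n) ha
  have hcoeff : fockInner (fun z => (a * z) ^ m) (fun z => (a * z) ^ n) =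
      a ^ m * (starRingEnd ℂ) (a ^ n) * fockInner (fun z => z ^ m) (fun z => z ^ n) := by
    simp only [fockInner]
    rw [← integral_const_mul]
    congr 1 with z
    simp only [mul_pow, map_mul]
    ring
  rw [hcoeff] at hinv
  by_contra hne
  have hone : a ^ m * (starRingEnd ℂ) (a ^ n) = 1 := by
    simpa [hne] using hinv
  apply h
  have hn : a ^ n * (starRingEnd ℂ) (a ^ n) = 1 := by rw [Complex.mul_conj']; simp [ha]
  calc a ^ m = a ^ m * (a ^ n * (starRingEnd ℂ) (a ^ n)) := by rw [hn, mul_one]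
    _ = a ^ n * (a ^ m * (starRingEnd ℂ) (a ^ n)) := by ring
    _ = a ^ n := by rw [hone, mul_one]

theorem fockNormSq_pow_pos (m : ℕ) : 0 < fockNormSq fun z => z ^ m := by
  refine lt_of_le_of_ne (integral_nonneg fun z => by positivity) fun h => ?_
  simpa using congrFun ((memFock_pow m).eq_zero_of_fockNormSq h.symm) 1

theorem fockInner_sum_pow {a : ℂ} (ha : ‖a‖ = 1) (hinj : Function.Injective fun m : ℕ => a ^ m)
    (s : Finset ℕ) (c d : ℕ → ℂ) :
    fockInner (fun z => ∑ m ∈ s, c m * z ^ m) (fun z => ∑ m ∈ s, d m * z ^ m) =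
      ∑ m ∈ s, c m * (starRingEnd ℂ) (d m) * fockNormSq fun z => z ^ m := by
  have hexp : ∀ z : ℂ, (∑ m ∈ s, c m * z ^ m) * (starRingEnd ℂ) (∑ m ∈ s, d m * z ^ m) =
      ∑ m ∈ s, ∑ n ∈ s, c m * (starRingEnd ℂ) (d n) * (z ^ m * (starRingEnd ℂ) (z ^ n)) := by
    intro z
    rw [map_sum, Finset.sum_mul_sum]
    refine Finset.sum_congr rfl fun m _ => Finset.sum_congr rfl fun n _ => ?_
    rw [map_mul]
    ring
  have hint : ∀ m n, Integrable
      (fun z : ℂ => c m * (starRingEnd ℂ) (d n) * (z ^ m * (starRingEnd ℂ) (z ^ n)))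
      gaussMeasure := fun m n =>
    ((memFock_pow m).integrable_mul_conj (memFock_pow n)).const_mul _
  rw [fockInner]
  simp_rw [hexp]
  rw [integral_finsetSum _ fun m _ => integrable_finsetSum _ fun n _ => hint m n]
  refine Finset.sum_congr rfl fun m hm => ?_
  rw [integral_finsetSum _ fun n _ => hint m n, Finset.sum_eq_single_of_mem m hm]
  · rw [integral_const_mul, ← fockInner_self, fockInner]
  · intro n _ hnm
    rw [integral_const_mul]
    have := fockInner_pow_of_ne ha (hinj.ne hnm.symm)
    rw [fockInner] at this
    rw [this, mul_zero]

end Fock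

theorem eq_pow_of_comp_mul_eq {f : ℂ → ℂ} (hf : Differentiable ℂ f) (hne : f ≠ 0) {a w : ℂ}
    (h : ∀ z, f (a * z) = w * f z) : ∃ m : ℕ, w = a ^ m := by
  obtain ⟨m, hm⟩ : ∃ m, iteratedDeriv m f 0 ≠ 0 := by
    by_contra! hzero
    apply hne
    ext z
    rw [← Complex.taylorSeries_eq_of_entire' (c := 0) (z := z) hf]
    simp [hzero]
  refine ⟨m, ?_⟩
  have hcomp := congrFun (iteratedDeriv_comp_const_mul (n := m) hf.contDiff a) 0
  simp_rw [h] at hcomp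
  rw [iteratedDeriv_const_mul_field, mul_zero] at hcomp
  exact mul_right_cancel₀ hm hcomp

section Density

theorem sphere_subset_closure_range_pow {a : ℂ} (ha : ‖a‖ = 1)
    (hroot : ∀ n : ℕ, 0 < n → a ^ n ≠ 1) :
    Metric.sphere (0 : ℂ) 1 ⊆ closure (Set.range fun m : ℕ => a ^ m) := by
  have : Fact (0 < 2 * Real.pi) := ⟨Real.two_pi_pos⟩
  let e := AddCircle.homeomorphCircle'
  obtain ⟨θ, hθ⟩ := e.surjective ⟨a, mem_sphere_zero_iff_norm.2 ha⟩
  have hpow (m : ℕ) : (e (m • θ) : ℂ) = a ^ m := by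
    have hmul : ∀ x y, e (x + y) = e x * e y := Real.Angle.toCircle_add
    induction m with
    | zero =>
      have hzero : e 0 = 1 := Real.Angle.toCircle_zero
      rw [zero_nsmul, hzero, Circle.coe_one, pow_zero]
    | succ m ih => rw [succ_nsmul, hmul, Circle.coe_mul, ih, hθ, pow_succ]
  have hord : addOrderOf θ = 0 := by
    refine addOrderOf_eq_zero_iff'.2 fun n hn h0 => hroot n hn ?_
    rw [← hpow, h0, ← zero_nsmul θ, hpow, pow_zero]
  have hdense : DenseRange fun m : ℕ => m • θ :=
    denseRange_zsmul_iff_nsmul.1 (AddCircle.denseRange_zsmul_iff.2 hord)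
  have hdense' := e.surjective.denseRange.comp hdense e.continuous
  intro z hz
  have hmem := image_closure_subset_closure_image (f := fun x : Circle => (x : ℂ))
    continuous_subtype_val ⟨_, hdense' ⟨z, hz⟩, rfl⟩
  rw [← Set.range_comp] at hmem
  convert hmem using 3
  funext m
  exact (hpow m).symm

theorem ball_subset_convexHull_of_sphere_subset_closure {E : Type*} [NormedAddCommGroup E]
    [NormedSpace ℝ E] [FiniteDimensional ℝ E] [Nontrivial E] {s : Set E}
    (hs : Metric.sphere (0 : E) 1 ⊆ closure s) : Metric.ball (0 : E) 1 ⊆ convexHull ℝ s := by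
  have hball : ∀ t : Set E, Convex ℝ t → IsClosed t → s ⊆ t → Metric.closedBall (0 : E) 1 ⊆ t := by
    intro t hconv hclosed hst
    rw [← convexHull_sphere_eq_closedBall (0 : E) zero_le_one]
    exact convexHull_min (hs.trans (closure_minimal hst hclosed)) hconv
  have hspan : affineSpan ℝ s = ⊤ := by
    have hsub := hball _ (affineSpan ℝ s).convex (affineSpan ℝ s).closed_of_finiteDimensional
      (subset_affineSpan ℝ s)
    have hint : (interior (affineSpan ℝ s : Set E)).Nonempty :=
      ⟨0, interior_mono hsub (Metric.ball_subset_interior_closedBall (by simp))⟩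
    simpa using (affineSpan ℝ s).convex.interior_nonempty_iff_affineSpan_eq_top.1 hint
  have hne := interior_convexHull_nonempty_iff_affineSpan_eq_top.2 hspan
  have hsub := hball (closure (convexHull ℝ s)) (convex_convexHull ℝ s).closure isClosed_closure
    ((subset_convexHull ℝ s).trans subset_closure)
  calc Metric.ball (0 : E) 1 ⊆ interior (closure (convexHull ℝ s)) :=
        Metric.ball_subset_interior_closedBall.trans (interior_mono hsub)
    _ = interior (convexHull ℝ s) :=
        (convex_convexHull ℝ s).interior_closure_eq_interior_of_nonempty_interior hne
    _ ⊆ convexHull ℝ s := interior_subset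

end Density

theorem numRange_mul_subset {a : ℂ} (ha : ‖a‖ = 1) :
    numRange (fun _ => 1) (fun z => a * z) ⊆
      Metric.ball (0 : ℂ) 1 ∪ {lam | ∃ m : ℕ, lam = a ^ m} := by
  rintro w ⟨f, hf, hnorm, hw⟩
  have hg := hf.comp_mul ha
  have hcomp : wcomp (fun _ => 1) (fun z => a * z) f = fun z => f (a * z) :=
    funext fun z => one_mul _
  rw [hcomp] at hw
  have hff : fockInner f f = 1 := by rw [fockInner_self, hnorm, Complex.ofReal_one]
  have hh := hg.add (hf.const_mul (-w))
  have hdefect : fockNormSq (fun z => f (a * z) + -w * f z) = 1 - ‖w‖ ^ 2 := by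
    have := fockInner_add_const_mul_self hf hg (-w)
    rw [fockInner_self, fockInner_comp_mul f f ha, hff, ← hw, map_neg] at this
    have hw2 := Complex.mul_conj' w
    apply Complex.ofReal_injective
    rw [this]
    push_cast
    linear_combination (-1 : ℂ) * hw2
  have hnonneg : 0 ≤ fockNormSq (fun z => f (a * z) + -w * f z) :=
    integral_nonneg fun z => by positivity
  by_cases hlt : ‖w‖ < 1
  · exact Or.inl (by simpa using hlt)
  · right
    have hzero := hh.eq_zero_of_fockNormSq (by nlinarith)
    refine eq_pow_of_comp_mul_eq hf.1 ?_ fun z => ?_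
    · rintro rfl
      simp [fockNormSq] at hnorm
    · have := congrFun hzero z
      simp only [Pi.zero_apply] at this
      linear_combination this

theorem convexHull_range_pow_subset_numRange {a : ℂ} (ha : ‖a‖ = 1)
    (hinj : Function.Injective fun m : ℕ => a ^ m) :
    convexHull ℝ (Set.range fun m : ℕ => a ^ m) ⊆ numRange (fun _ => 1) (fun z => a * z) := by
  intro w hw
  rw [convexHull_range_eq_exists_affineCombination] at hw
  obtain ⟨s, t, ht, hsum, rfl⟩ := hw
  rw [s.affineCombination_eq_linear_combination _ _ hsum]
  let N : ℕ → ℝ := fun m => fockNormSq fun z => z ^ m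
  have hNpos : ∀ m, 0 < N m := fockNormSq_pow_pos
  let c : ℕ → ℂ := fun m => (√(t m / N m) : ℝ)
  have hc : ∀ m ∈ s, c m * (starRingEnd ℂ) (c m) * N m = t m := by
    intro m hm
    simp only [c, Complex.conj_ofReal]
    rw [← Complex.ofReal_mul, Real.mul_self_sqrt (div_nonneg (ht m hm) (hNpos m).le),
      ← Complex.ofReal_mul, div_mul_cancel₀ _ (hNpos m).ne']
  refine ⟨fun z => ∑ m ∈ s, c m * z ^ m, memFock_sum_pow s c, ?_, ?_⟩
  · apply Complex.ofReal_injective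
    rw [← fockInner_self, fockInner_sum_pow ha hinj, Finset.sum_congr rfl hc,
      ← Complex.ofReal_sum, hsum]
  · have hcomp : wcomp (fun _ => 1) (fun z => a * z) (fun z => ∑ m ∈ s, c m * z ^ m) =
        fun z => ∑ m ∈ s, (c m * a ^ m) * z ^ m := by
      ext z
      simp only [wcomp, one_mul, mul_pow, mul_assoc]
    rw [hcomp, fockInner_sum_pow ha hinj]
    refine Finset.sum_congr rfl fun m hm => ?_
    rw [Complex.real_smul, ← hc m hm]
    ring

theorem pow_injective_of_forall_pow_ne_one {a : ℂ} (ha : ‖a‖ = 1)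
    (hroot : ∀ n : ℕ, 0 < n → a ^ n ≠ 1) : Function.Injective fun m : ℕ => a ^ m := by
  have hne : a ≠ 0 := norm_ne_zero_iff.1 (by simp [ha])
  refine Function.Injective.of_lt_imp_ne fun m n hmn h => hroot (n - m) (Nat.sub_pos_of_lt hmn) ?_
  apply mul_left_cancel₀ (pow_ne_zero m hne)
  rw [← pow_add, Nat.add_sub_cancel' hmn.le, mul_one]
  exact h.symm

/-- If `|a| = 1` and `a` is not a root of unity, the numerical range of `C_{az}` on `F²`
is the open unit disk together with the points `a^m`, `m ≥ 0`. -/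
theorem numRange_Caz_not_root_of_unity
    (a : ℂ) (ha : ‖a‖ = 1) (hroot : ∀ n : ℕ, 0 < n → a ^ n ≠ 1) :
    numRange (fun _ => 1) (fun z => a * z) =
      Metric.ball (0 : ℂ) 1 ∪ {lam | ∃ m : ℕ, lam = a ^ m} := by
  refine (numRange_mul_subset ha).antisymm (Set.Subset.trans ?_
    (convexHull_range_pow_subset_numRange ha (pow_injective_of_forall_pow_ne_one ha hroot)))
  refine Set.union_subset (ball_subset_convexHull_of_sphere_subset_closure
    (sphere_subset_closure_range_pow ha hroot)) ?_
  rintro _ ⟨m, rfl⟩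
  exact subset_convexHull ℝ _ ⟨m, rfl⟩
end
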